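/- arXiv:1704.02476 — 2 statements merged into one kernel-verified Lean document; each statement's English description precedes it below -/
import Mathlib

section
/- Let A be a set, k ≥ 2, and let j_0, …, j_k : A³ → A be Jónsson operations on A. Let Θ be a reflexive symmetric binary relation on A compatible with each j_i, and let σ = ⋃_{g∈G} σ_g and τ = ⋃_{f∈F} τ_f where G, F are nonempty and each σ_g and each τ_f is a reflexive binary relation compatible with each j_i. Then for every m ≥ 1, Θ ∩ (σ ∘_m τ) ⊆ X ∘_{k−1} Y, where X denotes the relation (Θ∩σ) ∘_m (Θ∩τ), Y denotes the relation (Θ∩τ)˘ ∘_m (Θ∩σ)˘ if m is even and (Θ∩σ)˘ ∘_m (Θ∩τ)˘ if m is odd, and X ∘_{k−1} Y is the alternating composition of the relations X and Y with k−1 factors starting with X. -/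
/-!
For `(a, c) ∈ Θ` and a chain `a = b₀, …, b_m = c` alternating between `⋃ σ` and `⋃ τ`, and for
`0 < i < k`, the elements `j i a b_l c` form a chain from `j i a a c` to `j i a c c` with steps in
the same relations, by compatibility and reflexivity. These steps also lie in `Θ`
(`jonsson_theta`). The Jónsson equations glue the chains for `i = 1, …, k - 1` into a chain from
`a` to `c`, provided that those with odd `i` are traversed forwards (giving `X`) and those with
even `i` backwards (giving `Y`). Alternating compositions are handled as explicit paths
(`mem_altComp_iff`).
-/

/-- Relational composition: `(a,c) ∈ rcomp R S` iff `∃ b, (a,b) ∈ R ∧ (b,c) ∈ S`. -/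
def rcomp {A : Type*} (R S : Set (A × A)) : Set (A × A) :=
  {p | ∃ b, (p.1, b) ∈ R ∧ (b, p.2) ∈ S}

/-- Alternating composition `R ∘ S ∘ R ∘ ⋯` with `m` factors (identity for `m = 0`). -/
def altComp {A : Type*} (R S : Set (A × A)) : ℕ → Set (A × A)
  | 0 => {p | p.1 = p.2}
  | n + 1 => rcomp R (altComp S R n)

/-- `relPow R m` is the composition of `m` copies of `R`. -/
def relPow {A : Type*} (R : Set (A × A)) (m : ℕ) : Set (A × A) := altComp R R m

/-- Compatibility of a binary relation with a ternary operation. -/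
def compat3 {A : Type*} (R : Set (A × A)) (f : A → A → A → A) : Prop :=
  ∀ a₁ a₂ a₃ b₁ b₂ b₃, (a₁, b₁) ∈ R → (a₂, b₂) ∈ R → (a₃, b₃) ∈ R →
    (f a₁ a₂ a₃, f b₁ b₂ b₃) ∈ R

/-- Compatibility of a binary relation with a 4-ary operation. -/
def compat4 {A : Type*} (R : Set (A × A)) (f : A → A → A → A → A) : Prop :=
  ∀ a₁ a₂ a₃ a₄ b₁ b₂ b₃ b₄, (a₁, b₁) ∈ R → (a₂, b₂) ∈ R → (a₃, b₃) ∈ R → (a₄, b₄) ∈ R →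
    (f a₁ a₂ a₃ a₄, f b₁ b₂ b₃ b₄) ∈ R

/-- Converse of a binary relation. -/
def conv {A : Type*} (R : Set (A × A)) : Set (A × A) := {p | (p.2, p.1) ∈ R}

/-- Transitive closure of a binary relation. -/
def transCl {A : Type*} (R : Set (A × A)) : Set (A × A) :=
  {p | Relation.TransGen (fun a b => (a, b) ∈ R) p.1 p.2}

theorem mem_altComp_iff {A : Type*} (n : ℕ) : ∀ (R S : Set (A × A)) (x y : A),
    (x, y) ∈ altComp R S n ↔
      ∃ p : ℕ → A, p 0 = x ∧ p n = y ∧ ∀ i < n, (p i, p (i + 1)) ∈ if Even i then R else S := by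
  induction n with
  | zero =>
    intro R S x y
    constructor
    · intro h
      exact ⟨fun _ => x, rfl, h, by simp⟩
    · rintro ⟨p, h0, h1, -⟩
      exact h0.symm.trans h1
  | succ n ih =>
    intro R S x y
    constructor
    · rintro ⟨b, hb, hb'⟩
      obtain ⟨p, h0, h1, hp⟩ := (ih S R b y).1 hb'
      refine ⟨fun i => Nat.casesOn i x p, rfl, h1, ?_⟩
      intro i hi
      cases i with
      | zero => simpa [h0] using hb
      | succ i =>
        have := hp i (by omega)
        by_cases he : Even i <;> simpa [he, Nat.even_add_one] using this
    · rintro ⟨p, h0, h1, hp⟩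
      refine ⟨p 1, ?_, (ih S R _ y).2 ⟨fun i => p (i + 1), rfl, h1, ?_⟩⟩
      · simpa [h0] using hp 0 (by omega)
      · intro i hi
        have := hp (i + 1) (by omega)
        by_cases he : Even i <;> simpa [he, Nat.even_add_one] using this

/-- The element `u = f a b c` is `Θ`-related to both `a = f a b a` and `c = f c b c`; hence
`u = f u b' u` is `Θ`-related to `f a b' c`. -/
theorem jonsson_theta {A : Type*} {f : A → A → A → A} {Θ : Set (A × A)}
    (hflat : ∀ x y, f x y x = x) (hrefl : ∀ a, (a, a) ∈ Θ)
    (hsymm : ∀ a b, (a, b) ∈ Θ → (b, a) ∈ Θ) (hcomp : compat3 Θ f)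
    {a c : A} (hac : (a, c) ∈ Θ) (b b' : A) : (f a b c, f a b' c) ∈ Θ := by
  have h1 : (f a b c, a) ∈ Θ := by
    simpa [hflat] using hcomp _ _ _ _ _ _ (hrefl a) (hrefl b) (hsymm _ _ hac)
  have h2 : (f a b c, c) ∈ Θ := by
    simpa [hflat] using hcomp _ _ _ _ _ _ hac (hrefl b) (hrefl c)
  simpa [hflat] using hcomp _ _ _ _ _ _ h1 (hrefl b') h2

theorem iUnion_step {A ι : Type*} {f : A → A → A → A} {ρ : ι → Set (A × A)}
    (hrefl : ∀ g a, (a, a) ∈ ρ g) (hcomp : ∀ g, compat3 (ρ g) f) (a c : A) {b b' : A}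
    (h : (b, b') ∈ ⋃ g, ρ g) : (f a b c, f a b' c) ∈ ⋃ g, ρ g := by
  obtain ⟨g, hg⟩ := Set.mem_iUnion.1 h
  exact Set.mem_iUnion.2 ⟨g, hcomp g _ _ _ _ _ _ (hrefl g a) hg (hrefl g c)⟩

/-- Jónsson operations give
`Θ ∩ (σ ∘_m τ) ⊆ X ∘_{k-1} Y` with `X = (Θ∩σ) ∘_m (Θ∩τ)` and
`Y = (Θ∩τ)˘ ∘_m (Θ∩σ)˘` for even `m`, `Y = (Θ∩σ)˘ ∘_m (Θ∩τ)˘` for odd `m`. -/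
theorem stmt3 {A : Type*} {k : ℕ} (hk : 2 ≤ k)
    (j : ℕ → A → A → A → A)
    (hj0 : ∀ x y z, j 0 x y z = x)
    (hjk : ∀ x y z, j k x y z = z)
    (hjflat : ∀ i, i ≤ k → ∀ x y, j i x y x = x)
    (hjeven : ∀ i, i < k → Even i → ∀ x z, j i x x z = j (i + 1) x x z)
    (hjodd : ∀ i, i < k → Odd i → ∀ x z, j i x z z = j (i + 1) x z z)
    (Θ : Set (A × A))
    (hΘrefl : ∀ a, (a, a) ∈ Θ)
    (hΘsymm : ∀ a b, (a, b) ∈ Θ → (b, a) ∈ Θ)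
    (hΘcomp : ∀ i, i ≤ k → compat3 Θ (j i))
    {G : Type*} [Nonempty G] (σ : G → Set (A × A))
    (hσrefl : ∀ g a, (a, a) ∈ σ g)
    (hσcomp : ∀ g i, i ≤ k → compat3 (σ g) (j i))
    {F : Type*} [Nonempty F] (τ : F → Set (A × A))
    (hτrefl : ∀ f a, (a, a) ∈ τ f)
    (hτcomp : ∀ f i, i ≤ k → compat3 (τ f) (j i)) :
    ∀ m, 1 ≤ m →
      Θ ∩ altComp (⋃ g, σ g) (⋃ f, τ f) m ⊆
        altComp (altComp (Θ ∩ (⋃ g, σ g)) (Θ ∩ (⋃ f, τ f)) m)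
          (if Even m then
              altComp (conv (Θ ∩ (⋃ f, τ f))) (conv (Θ ∩ (⋃ g, σ g))) m
            else
              altComp (conv (Θ ∩ (⋃ g, σ g))) (conv (Θ ∩ (⋃ f, τ f))) m)
          (k - 1) := by
  intro m _ ⟨a, c⟩ ⟨hac, h⟩
  obtain ⟨p, hp0, hpm, hp⟩ := (mem_altComp_iff m _ _ a c).1 h
  have step : ∀ i ≤ k, ∀ l < m, (j i a (p l) c, j i a (p (l + 1)) c) ∈
      if Even l then Θ ∩ ⋃ g, σ g else Θ ∩ ⋃ f, τ f := by
    intro i hi l hl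
    have hθ := jonsson_theta (hjflat i hi) hΘrefl hΘsymm (hΘcomp i hi) hac (p l) (p (l + 1))
    have hpl := hp l hl
    split_ifs at hpl ⊢ with he
    · exact ⟨hθ, iUnion_step hσrefl (fun g => hσcomp g i hi) a c hpl⟩
    · exact ⟨hθ, iUnion_step hτrefl (fun g => hτcomp g i hi) a c hpl⟩
  -- `q i` is the starting point of the segment of the path coming from `j (i + 1)`.
  let q : ℕ → A := fun i => if Even i then j (i + 1) a a c else j (i + 1) a c c
  refine (mem_altComp_iff (k - 1) _ _ a c).2 ⟨q, ?_, ?_, ?_⟩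
  · have := hjeven 0 (by omega) (by simp) a c
    simp [q, ← this, hj0]
  · have hk1 : k - 1 + 1 = k := by omega
    simp [q, hk1, hjk]
  · intro i hi
    by_cases he : Even i
    · have hq : q (i + 1) = j (i + 1) a c c := by
        simp [q, he, Nat.even_add_one, hjodd (i + 1) (by omega) he.add_one]
      have hq' : q i = j (i + 1) a a c := by simp [q, he]
      rw [if_pos he, hq, hq']
      exact (mem_altComp_iff m _ _ _ _).2
        ⟨fun l => j (i + 1) a (p l) c, by simp [hp0], by simp [hpm], step (i + 1) (by omega)⟩
    · have he' : Even (i + 1) := by simpa [Nat.even_add_one] using he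
      have hq : q (i + 1) = j (i + 1) a a c := by
        simp [q, he', hjeven (i + 1) (by omega) he']
      have hq' : q i = j (i + 1) a c c := by simp [q, he]
      rw [if_neg he, hq, hq']
      -- The `l`-th step of the reversed path is the converse of the step with index `m - 1 - l`.
      have rev : ∀ l < m, (j (i + 1) a (p (m - l)) c, j (i + 1) a (p (m - (l + 1))) c) ∈
          if Even (m - 1 - l) then conv (Θ ∩ ⋃ g, σ g) else conv (Θ ∩ ⋃ f, τ f) := by
        intro l hl
        have hs := step (i + 1) (by omega) (m - 1 - l) (by omega)
        rw [show m - 1 - l + 1 = m - l by omega, show m - 1 - l = m - (l + 1) by omega] at hs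
        rw [show m - 1 - l = m - (l + 1) by omega]
        split_ifs at hs ⊢ <;> exact hs
      split_ifs with hm <;> refine (mem_altComp_iff m _ _ _ _).2
        ⟨fun l => j (i + 1) a (p (m - l)) c, by simp [hpm], by simp [hp0], fun l hl => ?_⟩
      · have hr := rev l hl
        have : Even (m - 1 - l) ↔ ¬ Even l := by
          clear * - hl hm
          grind
        by_cases hl' : Even l <;> simpa [this, hl'] using hr
      · have hr := rev l hl
        have : Even (m - 1 - l) ↔ Even l := by
          clear * - hl hm
          grind
        by_cases hl' : Even l <;> simpa [this, hl'] using hr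
end

section
/- Let A be a set, k ≥ 2, and let j_0, …, j_k : A³ → A be Jónsson operations on A. Let Θ be a reflexive symmetric binary relation on A compatible with each j_i, and let σ = ⋃_{g∈G} σ_g where G is nonempty and each σ_g is a reflexive symmetric binary relation compatible with each j_i. Then for every m ≥ 1, Θ ∩ σ^{∘m} ⊆ (Θ ∩ σ)^{∘(mk−m)}. -/
theorem relPow_append {A : Type*} {R : Set (A × A)} {m n : ℕ} {x y z : A}
    (hxy : (x, y) ∈ relPow R m) (hyz : (y, z) ∈ relPow R n) : (x, z) ∈ relPow R (m + n) := by
  induction m generalizing x with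
  | zero =>
    have h : x = y := hxy
    rw [h, Nat.zero_add]
    exact hyz
  | succ m ih =>
    obtain ⟨b, hb, hby⟩ := hxy
    rw [Nat.succ_add]
    exact ⟨b, hb, ih hby⟩

theorem relPow_symm {A : Type*} {R : Set (A × A)} (hR : ∀ a b, (a, b) ∈ R → (b, a) ∈ R)
    {n : ℕ} {x y : A} (h : (x, y) ∈ relPow R n) : (y, x) ∈ relPow R n := by
  induction n generalizing x with
  | zero =>
    have h' : x = y := h
    exact h'.symm
  | succ n ih =>
    obtain ⟨b, hb, hby⟩ := h
    exact relPow_append (n := 1) (ih hby) ⟨x, hR _ _ hb, rfl⟩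

theorem relPow_map {A B : Type*} {R : Set (A × A)} {S : Set (B × B)} (f : A → B)
    (hf : ∀ a b, (a, b) ∈ R → (f a, f b) ∈ S)
    {n : ℕ} {x y : A} (h : (x, y) ∈ relPow R n) : (f x, f y) ∈ relPow S n := by
  induction n generalizing x with
  | zero =>
    have h' : x = y := h
    exact congrArg f h'
  | succ n ih =>
    obtain ⟨b, hb, hby⟩ := h
    exact ⟨f b, hf _ _ hb, ih hby⟩

/-- Compatibility with an operation satisfying `f x y x = x` yields a link between the values at
arbitrary middle arguments, without any transitivity of `Θ`. -/
theorem theta_link {A : Type*} {Θ : Set (A × A)} {f : A → A → A → A}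
    (hflat : ∀ x y, f x y x = x) (hrefl : ∀ a, (a, a) ∈ Θ)
    (hsymm : ∀ a b, (a, b) ∈ Θ → (b, a) ∈ Θ) (hcomp : compat3 Θ f)
    {a c : A} (hac : (a, c) ∈ Θ) (b b' : A) : (f a b c, f a b' c) ∈ Θ := by
  have h₁ : (f a b' a, f a b' c) ∈ Θ := hcomp _ _ _ _ _ _ (hrefl a) (hrefl b') hac
  have h₂ : (f c b' c, f a b' c) ∈ Θ := hcomp _ _ _ _ _ _ (hsymm _ _ hac) (hrefl b') (hrefl c)
  have h := hcomp _ _ _ _ _ _ h₁ (hrefl b) h₂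
  simpa only [hflat] using h

/-- Jónsson operations give `Θ ∩ σ^{∘m} ⊆ (Θ ∩ σ)^{∘(mk-m)}`
for `σ` a union of tolerances. -/
theorem stmt4 {A : Type*} {k : ℕ} (hk : 2 ≤ k)
    (j : ℕ → A → A → A → A)
    (hj0 : ∀ x y z, j 0 x y z = x)
    (hjk : ∀ x y z, j k x y z = z)
    (hjflat : ∀ i, i ≤ k → ∀ x y, j i x y x = x)
    (hjeven : ∀ i, i < k → Even i → ∀ x z, j i x x z = j (i + 1) x x z)
    (hjodd : ∀ i, i < k → Odd i → ∀ x z, j i x z z = j (i + 1) x z z)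
    (Θ : Set (A × A))
    (hΘrefl : ∀ a, (a, a) ∈ Θ)
    (hΘsymm : ∀ a b, (a, b) ∈ Θ → (b, a) ∈ Θ)
    (hΘcomp : ∀ i, i ≤ k → compat3 Θ (j i))
    {G : Type*} [Nonempty G] (σ : G → Set (A × A))
    (hσrefl : ∀ g a, (a, a) ∈ σ g)
    (hσsymm : ∀ g a b, (a, b) ∈ σ g → (b, a) ∈ σ g)
    (hσcomp : ∀ g i, i ≤ k → compat3 (σ g) (j i)) :
    ∀ m, 1 ≤ m →
      Θ ∩ relPow (⋃ g, σ g) m ⊆ relPow (Θ ∩ (⋃ g, σ g)) (m * k - m) := by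
  rintro m - ⟨a, c⟩ ⟨hac, hm⟩
  have hsymm : ∀ x y, (x, y) ∈ Θ ∩ (⋃ g, σ g) → (y, x) ∈ Θ ∩ (⋃ g, σ g) := by
    rintro x y ⟨h₁, h₂⟩
    obtain ⟨g, hg⟩ := Set.mem_iUnion.1 h₂
    exact ⟨hΘsymm _ _ h₁, Set.mem_iUnion.2 ⟨g, hσsymm _ _ _ hg⟩⟩
  have row : ∀ i, i ≤ k → (j i a a c, j i a c c) ∈ relPow (Θ ∩ (⋃ g, σ g)) m := by
    intro i hi
    refine relPow_map (R := ⋃ g, σ g) (fun b => j i a b c) ?_ hm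
    intro b b' hb
    constructor
    · exact theta_link (hjflat i hi) hΘrefl hΘsymm (hΘcomp i hi) hac b b'
    · obtain ⟨g, hg⟩ := Set.mem_iUnion.1 hb
      exact Set.mem_iUnion.2
        ⟨g, hσcomp g i hi _ _ _ _ _ _ (hσrefl g a) hg (hσrefl g c)⟩
  have key : ∀ i, i < k →
      (Even i → (a, j (i + 1) a a c) ∈ relPow (Θ ∩ (⋃ g, σ g)) (m * i)) ∧
      (Odd i → (a, j (i + 1) a c c) ∈ relPow (Θ ∩ (⋃ g, σ g)) (m * i)) := by
    intro i
    induction i with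
    | zero =>
      intro h0
      refine ⟨fun he => ?_, fun ho => absurd ho (by decide)⟩
      rw [← hjeven 0 h0 he, hj0]
      exact rfl
    | succ i ih =>
      intro hi
      obtain ⟨ihe, iho⟩ := ih (by omega)
      refine ⟨fun he => ?_, fun ho => ?_⟩
      · rw [← hjeven (i + 1) hi he, Nat.mul_succ]
        exact relPow_append (iho (by grind)) (relPow_symm hsymm (row (i + 1) hi.le))
      · rw [← hjodd (i + 1) hi ho, Nat.mul_succ]
        exact relPow_append (ihe (by grind)) (row (i + 1) hi.le)
  have hlen : m * k - m = m * (k - 1) := by rw [Nat.mul_sub, Nat.mul_one]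
  obtain ⟨he, ho⟩ := key (k - 1) (by omega)
  rw [Nat.sub_add_cancel (by omega), hjk] at he ho
  rw [hlen]
  exact (Nat.even_or_odd (k - 1)).elim he ho
end
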